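/- arXiv:1406.0689 — 4 statements merged into one kernel-verified Lean document; each statement's English description precedes it below -/
import Mathlib

section
/- Let b_0 = b_1 = 1 and b_{2k} = b_{2k+1} = (1/4^k)·binomial(2k, k) for k ≥ 1, and let C_n(x) = Σ_{k=0}^{n} (−1)^k b_k cos(kx). Then for every n with 2 ≤ n ≤ 21, n ≠ 6, and every x ∈ (5π/8, π): (820/33)(1 − cos(x/10)) ≤ C_n(x). -/
open Real

noncomputable def b (k : ℕ) : ℝ := (Nat.choose (2*(k/2)) (k/2) : ℝ) / 4^(k/2)

noncomputable def C (n : ℕ) (x : ℝ) : ℝ :=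
  ∑ k ∈ Finset.range (n+1), (-1)^k * b k * cos (k * x)

/-!
Put `s = cos (x / 2)`. Since `cos (k x) = T_{2k}(s)` for the Chebyshev polynomials `T`, the sum
`C n x` is a polynomial of degree `2n` in `s ∈ [0, 1]`. Since `s = T₅(cos (x / 10))`, the function
`1 - cos (x / 10)` is algebraic in `s`, and it is bounded above by a cubic in `s` that nearly
touches it where `C n x - 820 / 33 * (1 - cos (x / 10))` has its tightest interior minima, near
`x = 2.3` for `n = 5` and `x = 2.5` for `n = 7`. What remains is, for each `n`, the nonnegativity
on `[0, 1]` of an explicit integer polynomial. This is decided by bisection in the manner of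
Vincent: a polynomial with nonnegative coefficients is nonnegative on `[0, ∞)`, and `(0, ∞)` splits
into `[1, ∞)` and `(0, 1]`, which `t ↦ t + 1` and `t ↦ 1 / (t + 1)` parametrize by `[0, ∞)` again.
-/

namespace Vietoris

open Polynomial (aeval)
open scoped Polynomial

section CoefficientLists

variable {R : Type*}

/-- The polynomial with the given coefficients, lowest degree first. Coefficient lists are the
computable representation of polynomials on which the nonnegativity test runs; trailing zeros are
allowed. -/
noncomputable def ofCoeffs [Semiring R] : List R → R[X]
  | [] => 0
  | a :: p => Polynomial.C a + Polynomial.X * ofCoeffs p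

/-- Sum of polynomials on coefficient lists. -/
def addCoeffs [Add R] : List R → List R → List R
  | [], q => q
  | p, [] => p
  | a :: p, c :: q => (a + c) :: addCoeffs p q

/-- Multiplication of a polynomial by a scalar on coefficient lists. -/
def smulCoeffs [Mul R] (a : R) (p : List R) : List R := p.map (a * ·)

/-- The Horner step `q ↦ a + (X + 1) * q` on coefficient lists. -/
def hornerStep [Add R] (a : R) : List R → List R
  | [] => [a]
  | c :: q => (a + c) :: hornerStep c q

/-- The Taylor shift `p(X) ↦ p(X + 1)` on coefficient lists, by Horner's scheme. -/
def shiftCoeffs [Add R] : List R → List R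
  | [] => []
  | a :: p => hornerStep a (shiftCoeffs p)

variable [CommSemiring R]

theorem ofCoeffs_addCoeffs (p q : List R) :
    ofCoeffs (addCoeffs p q) = ofCoeffs p + ofCoeffs q := by
  induction p generalizing q with
  | nil => simp [addCoeffs, ofCoeffs]
  | cons a p ih =>
    cases q with
    | nil => simp [addCoeffs, ofCoeffs]
    | cons c q =>
      simp only [addCoeffs, ofCoeffs, ih, map_add]
      ring

theorem ofCoeffs_smulCoeffs (a : R) (p : List R) :
    ofCoeffs (smulCoeffs a p) = Polynomial.C a * ofCoeffs p := by
  induction p with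
  | nil => simp [smulCoeffs, ofCoeffs]
  | cons c p ih =>
    simp only [smulCoeffs, List.map_cons, ofCoeffs, map_mul] at ih ⊢
    rw [ih]
    ring

theorem ofCoeffs_hornerStep (a : R) (q : List R) :
    ofCoeffs (hornerStep a q) = Polynomial.C a + (Polynomial.X + 1) * ofCoeffs q := by
  induction q generalizing a with
  | nil => simp [hornerStep, ofCoeffs]
  | cons c q ih =>
    simp only [hornerStep, ofCoeffs, ih, map_add]
    ring

theorem ofCoeffs_shiftCoeffs (p : List R) :
    ofCoeffs (shiftCoeffs p) = (ofCoeffs p).comp (Polynomial.X + 1) := by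
  induction p with
  | nil => simp [shiftCoeffs, ofCoeffs]
  | cons a p ih => simp [shiftCoeffs, ofCoeffs, ofCoeffs_hornerStep, ih]

theorem aeval_ofCoeffs_shiftCoeffs {A : Type*} [CommSemiring A] [Algebra R A] (p : List R) (t : A) :
    aeval t (ofCoeffs (shiftCoeffs p)) = aeval (t + 1) (ofCoeffs p) := by
  simp [ofCoeffs_shiftCoeffs, Polynomial.aeval_comp]

theorem aeval_zero_ofCoeffs {A : Type*} [CommSemiring A] [Algebra R A] (p : List R) :
    aeval (0 : A) (ofCoeffs p) = algebraMap R A (p.headD 0) := by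
  cases p <;> simp [ofCoeffs]

theorem ofCoeffs_append_singleton (p : List R) (a : R) :
    ofCoeffs (p ++ [a]) = ofCoeffs p + Polynomial.C a * Polynomial.X ^ p.length := by
  induction p with
  | nil => simp [ofCoeffs]
  | cons c p ih =>
    simp only [List.cons_append, ofCoeffs, ih, List.length_cons]
    ring

theorem pow_length_mul_aeval_inv_ofCoeffs_reverse {K : Type*} [Field K] [Algebra R K]
    (p : List R) {t : K} (ht : t ≠ 0) :
    t ^ p.length * aeval t⁻¹ (ofCoeffs p.reverse) = t * aeval t (ofCoeffs p) := by
  induction p with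
  | nil => simp [ofCoeffs]
  | cons a p ih =>
    have cancel : t ^ p.length * t⁻¹ ^ p.length = 1 := by
      rw [← mul_pow, mul_inv_cancel₀ ht, one_pow]
    simp only [List.reverse_cons, ofCoeffs_append_singleton, List.length_reverse, List.length_cons,
      ofCoeffs, map_add, map_mul, map_pow, Polynomial.aeval_C, Polynomial.aeval_X]
    linear_combination t * ih + t * algebraMap R K a * cancel

end CoefficientLists

section NonnegativityTest

/-- A sufficient test for nonnegativity on `[0, ∞)` of a polynomial with integer coefficients:
either all coefficients are nonnegative, or the test recursively succeeds on `[1, ∞)` and on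
`(0, 1]`, the point `0` being covered by the constant coefficient. The first argument bounds the
depth of the recursion. -/
def nonnegTest : ℕ → List ℤ → Bool
  | 0, p => p.all (0 ≤ ·)
  | depth + 1, p => p.all (0 ≤ ·) ||
      (nonnegTest depth (shiftCoeffs p) &&
        (0 ≤ p.headD 0 && nonnegTest depth (shiftCoeffs p.reverse)))

/-- The analogue of `nonnegTest` on `[0, 1]`. -/
def unitNonnegTest (depth : ℕ) (p : List ℤ) : Bool :=
  0 ≤ p.headD 0 && nonnegTest depth (shiftCoeffs p.reverse)

variable {K : Type*} [Field K] [LinearOrder K] [IsStrictOrderedRing K] {p : List ℤ} {t : K}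

theorem aeval_ofCoeffs_nonneg_of_all_nonneg (hp : ∀ a ∈ p, 0 ≤ a) (ht : 0 ≤ t) :
    0 ≤ aeval t (ofCoeffs p) := by
  induction p with
  | nil => simp [ofCoeffs]
  | cons a p ih =>
    obtain ⟨ha, hp⟩ := List.forall_mem_cons.1 hp
    have ha' : (0 : K) ≤ a := mod_cast ha
    simpa [ofCoeffs] using add_nonneg ha' (mul_nonneg ht (ih hp))

theorem aeval_ofCoeffs_nonneg_of_mem_Icc (h0 : 0 ≤ p.headD 0)
    (hp : ∀ u : K, 0 ≤ u → 0 ≤ aeval u (ofCoeffs (shiftCoeffs p.reverse)))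
    (ht : t ∈ Set.Icc 0 1) : 0 ≤ aeval t (ofCoeffs p) := by
  rcases ht.1.eq_or_lt with rfl | ht0
  · rw [aeval_zero_ofCoeffs, eq_intCast]
    exact mod_cast h0
  · have reversed : 0 ≤ aeval t⁻¹ (ofCoeffs p.reverse) := by
      simpa [aeval_ofCoeffs_shiftCoeffs] using
        hp (t⁻¹ - 1) (sub_nonneg.2 ((one_le_inv₀ ht0).2 ht.2))
    refine nonneg_of_mul_nonneg_right ?_ ht0
    rw [← pow_length_mul_aeval_inv_ofCoeffs_reverse p ht0.ne']
    positivity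

theorem aeval_ofCoeffs_nonneg_of_nonnegTest {depth : ℕ} (hp : nonnegTest depth p) (ht : 0 ≤ t) :
    0 ≤ aeval t (ofCoeffs p) := by
  induction depth generalizing p t with
  | zero => exact aeval_ofCoeffs_nonneg_of_all_nonneg (by simpa [nonnegTest] using hp) ht
  | succ depth ih =>
    simp only [nonnegTest, Bool.or_eq_true, Bool.and_eq_true, List.all_eq_true,
      decide_eq_true_eq] at hp
    rcases hp with coeffs_nonneg | ⟨above_one, head_nonneg, below_one⟩
    · exact aeval_ofCoeffs_nonneg_of_all_nonneg coeffs_nonneg ht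
    · rcases le_total t 1 with ht1 | ht1
      · exact aeval_ofCoeffs_nonneg_of_mem_Icc head_nonneg (fun _ ↦ ih below_one) ⟨ht, ht1⟩
      · simpa [aeval_ofCoeffs_shiftCoeffs] using ih above_one (sub_nonneg.2 ht1)

theorem aeval_ofCoeffs_nonneg_of_unitNonnegTest {depth : ℕ} (hp : unitNonnegTest depth p)
    (ht : t ∈ Set.Icc 0 1) : 0 ≤ aeval t (ofCoeffs p) := by
  simp only [unitNonnegTest, Bool.and_eq_true, decide_eq_true_eq] at hp
  exact aeval_ofCoeffs_nonneg_of_mem_Icc hp.1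
    (fun _ ↦ aeval_ofCoeffs_nonneg_of_nonnegTest hp.2) ht

end NonnegativityTest

section CosinePolynomial

/-- Coefficient list of the Chebyshev polynomial `T_n`. -/
def chebyshevTCoeffs : ℕ → List ℤ
  | 0 => [1]
  | 1 => [0, 1]
  | n + 2 => addCoeffs (0 :: smulCoeffs 2 (chebyshevTCoeffs (n + 1)))
      (smulCoeffs (-1) (chebyshevTCoeffs n))

theorem ofCoeffs_chebyshevTCoeffs (n : ℕ) :
    ofCoeffs (chebyshevTCoeffs n) = Polynomial.Chebyshev.T ℤ n := by
  induction n using Nat.twoStepInduction with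
  | zero => simp [chebyshevTCoeffs, ofCoeffs]
  | one => simp [chebyshevTCoeffs, ofCoeffs]
  | more n ih ih' =>
    push_cast at ih' ⊢
    simp only [chebyshevTCoeffs, ofCoeffs_addCoeffs, ofCoeffs, ofCoeffs_smulCoeffs, ih, ih',
      Polynomial.Chebyshev.T_add_two, map_zero, map_neg, map_one, map_ofNat]
    ring

theorem aeval_cos_half_chebyshevTCoeffs (k : ℕ) (x : ℝ) :
    aeval (cos (x / 2)) (ofCoeffs (chebyshevTCoeffs (2 * k))) = cos (k * x) := by
  rw [ofCoeffs_chebyshevTCoeffs, Polynomial.Chebyshev.aeval_T, Polynomial.Chebyshev.T_real_cos]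
  congr 1
  push_cast
  ring

/-- Coefficient list of `4 ^ n * C n x` as a polynomial in `cos (x / 2)`; the factor `4 ^ n` clears
the denominators. -/
def cosinePolyCoeffs : ℕ → List ℤ
  | 0 => [1]
  | n + 1 => addCoeffs (smulCoeffs 4 (cosinePolyCoeffs n))
      (smulCoeffs ((-1) ^ (n + 1) * 4 ^ (n + 1 - (n + 1) / 2) * Nat.centralBinom ((n + 1) / 2))
        (chebyshevTCoeffs (2 * (n + 1))))

theorem four_pow_sub_mul_centralBinom {n k : ℕ} (hk : k / 2 ≤ n) :
    (4 : ℝ) ^ (n - k / 2) * Nat.centralBinom (k / 2) = 4 ^ n * b k := by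
  rw [b, ← Nat.centralBinom, pow_sub₀ _ four_ne_zero hk]
  ring

theorem aeval_cos_half_cosinePolyCoeffs (n : ℕ) (x : ℝ) :
    aeval (cos (x / 2)) (ofCoeffs (cosinePolyCoeffs n)) = 4 ^ n * C n x := by
  induction n with
  | zero => simp [cosinePolyCoeffs, ofCoeffs, C, b]
  | succ n ih =>
    have next_b := four_pow_sub_mul_centralBinom (n := n + 1) (k := n + 1) (by lia)
    have C_succ : C (n + 1) x = C n x + (-1) ^ (n + 1) * b (n + 1) * cos ((n + 1 : ℕ) * x) :=
      Finset.sum_range_succ ..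
    simp only [cosinePolyCoeffs, ofCoeffs_addCoeffs, ofCoeffs_smulCoeffs, map_add, map_mul,
      map_pow, map_neg, map_one, map_ofNat, map_natCast, aeval_cos_half_chebyshevTCoeffs, ih,
      C_succ]
    push_cast
    linear_combination (-1) ^ (n + 1) * cos ((n + 1) * x) * next_b

end CosinePolynomial

section TenthAngle

theorem cos_five_mul (θ : ℝ) : cos (5 * θ) = 16 * cos θ ^ 5 - 20 * cos θ ^ 3 + 5 * cos θ := by
  rw [show 5 * θ = 3 * θ + 2 * θ by ring, cos_add, cos_three_mul, sin_three_mul, cos_two_mul,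
    sin_two_mul]
  linear_combination (8 * cos θ * sin θ ^ 2 + 2 * cos θ - 8 * cos θ ^ 3) * sin_sq_add_cos_sq θ

theorem cubic_one_sub_cos_le_one_sub_cos_five_mul {θ : ℝ} (hθ : 1 - cos θ ≤ 1 / 20) :
    25 * (1 - cos θ) - 100 * (1 - cos θ) ^ 2 + 136 * (1 - cos θ) ^ 3 ≤ 1 - cos (5 * θ) := by
  rw [cos_five_mul]
  have h0 : 0 ≤ 1 - cos θ := sub_nonneg.2 (cos_le_one θ)
  nlinarith [mul_nonneg (pow_nonneg h0 3) (sub_nonneg.2 hθ), pow_nonneg h0 5]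

-- After division by `w` the difference of the two sides has its minimum, below `1 / 50`, near
-- `w = 1 / 42`, hence the squares.
theorem mul_le_cubic_of_cubic_le {w r : ℝ} (h0 : 0 ≤ w) (h1 : w ≤ 1 / 20)
    (hr : 25 * w - 100 * w ^ 2 + 136 * w ^ 3 ≤ r) :
    469 * w ≤ r * (19 + 2 * r + 2 * r ^ 2) := by
  set q := 25 * w - 100 * w ^ 2 + 136 * w ^ 3 with hq
  have hd : 0 ≤ 1 / 20 - w := sub_nonneg.2 h1
  have hwd : 0 ≤ w * (1 / 20 - w) := mul_nonneg h0 hd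
  have q_nonneg : 0 ≤ q := by nlinarith [pow_nonneg h0 3]
  have r_nonneg : 0 ≤ r := q_nonneg.trans hr
  calc
    469 * w ≤ q * (19 + 2 * q + 2 * q ^ 2) := by
      rw [hq]
      nlinarith [mul_nonneg h0 (sq_nonneg (1 - 42 * w)), mul_nonneg hwd (sq_nonneg (1 - 42 * w)),
        mul_nonneg hwd (sq_nonneg (w * (1 - 42 * w))), mul_nonneg (pow_nonneg h0 5) hd,
        mul_nonneg (pow_nonneg h0 7) hd, pow_nonneg h0 7, pow_nonneg h0 9]
    _ ≤ r * (19 + 2 * r + 2 * r ^ 2) := by gcongr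

theorem one_sub_cos_div_ten_le_one_div_twenty {x : ℝ} (hx : |x| ≤ π) :
    1 - cos (x / 10) ≤ 1 / 20 := by
  have sq_le : x ^ 2 ≤ 10 := by
    have : |x| ≤ 3.15 := hx.trans pi_lt_d2.le
    rw [← sq_abs]
    nlinarith [abs_nonneg x]
  linarith [one_sub_sq_div_two_le_cos (x := x / 10)]

theorem one_sub_cos_div_ten_le_cubic_cos_half {x : ℝ} (hx : |x| ≤ π) :
    469 * (1 - cos (x / 10)) ≤
      23 - 29 * cos (x / 2) + 8 * cos (x / 2) ^ 2 - 2 * cos (x / 2) ^ 3 := by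
  have hw := one_sub_cos_div_ten_le_one_div_twenty hx
  have hr := cubic_one_sub_cos_le_one_sub_cos_five_mul hw
  rw [show 5 * (x / 10) = x / 2 by ring] at hr
  linarith [mul_le_cubic_of_cubic_le (sub_nonneg.2 (cos_le_one _)) hw hr]

end TenthAngle

section Gap

/-- Coefficient list, in the variable `s = cos (x / 2)`, of `33 * 469 * 4 ^ n` times the difference
of `C n x` and `820 / 33 * ((23 - 29 s + 8 s² - 2 s³) / 469)`, the cubic majorant of
`820 / 33 * (1 - cos (x / 10))`. -/
def gapCoeffs (n : ℕ) : List ℤ :=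
  addCoeffs (smulCoeffs (33 * 469) (cosinePolyCoeffs n))
    (smulCoeffs (-(820 * 4 ^ n)) [23, -29, 8, -2])

theorem unitNonnegTest_gapCoeffs :
    ∀ n ∈ Finset.Icc 1 21, n ≠ 6 → unitNonnegTest 14 (gapCoeffs n) := by
  decide +kernel

theorem aeval_cos_half_gapCoeffs (n : ℕ) (x : ℝ) :
    aeval (cos (x / 2)) (ofCoeffs (gapCoeffs n)) = 4 ^ n * (33 * 469 * C n x -
      820 * (23 - 29 * cos (x / 2) + 8 * cos (x / 2) ^ 2 - 2 * cos (x / 2) ^ 3)) := by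
  simp only [gapCoeffs, ofCoeffs_addCoeffs, ofCoeffs_smulCoeffs, map_add, map_mul,
    map_pow, map_neg, map_zero, map_ofNat, aeval_cos_half_cosinePolyCoeffs, Polynomial.aeval_X,
    ofCoeffs]
  ring

theorem cubic_cos_half_le_C {n : ℕ} (hn : n ∈ Finset.Icc 1 21) (hn6 : n ≠ 6) {x : ℝ}
    (hx : |x| ≤ π) :
    820 * (23 - 29 * cos (x / 2) + 8 * cos (x / 2) ^ 2 - 2 * cos (x / 2) ^ 3) ≤
      33 * 469 * C n x := by
  obtain ⟨hx_lower, hx_upper⟩ := abs_le.1 hx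
  have cos_half_mem : cos (x / 2) ∈ Set.Icc 0 1 :=
    ⟨cos_nonneg_of_mem_Icc ⟨by linarith, by linarith⟩, cos_le_one _⟩
  have gap_nonneg :=
    aeval_ofCoeffs_nonneg_of_unitNonnegTest (unitNonnegTest_gapCoeffs n hn hn6) cos_half_mem
  rw [aeval_cos_half_gapCoeffs] at gap_nonneg
  exact sub_nonneg.1 (nonneg_of_mul_nonneg_right gap_nonneg (by positivity))

end Gap

end Vietoris

open Vietoris in
theorem lemma7_general {n : ℕ} (hn : n ∈ Finset.Icc 1 21) (hn6 : n ≠ 6) {x : ℝ} (hx : |x| ≤ π) :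
    820 / 33 * (1 - cos (x / 10)) ≤ C n x := by
  linarith [one_sub_cos_div_ten_le_cubic_cos_half hx, cubic_cos_half_le_C hn hn6 hx]

theorem lemma7 : ∀ n : ℕ, 2 ≤ n → n ≤ 21 → n ≠ 6 →
    ∀ x ∈ Set.Ioo (5 * π / 8) π,
      (820/33) * (1 - cos (x/10)) ≤ C n x := by
  intro n hn hn' hn6 x hx
  exact lemma7_general (Finset.mem_Icc.2 ⟨by lia, hn'⟩) hn6
    (abs_le.2 ⟨by linarith [hx.1, pi_pos], hx.2.le⟩)
end

section
/- Let b_k be the Vietoris coefficients (b_{2k} = b_{2k+1} = 4^{−k}·binomial(2k,k)) and Δ(x) = Σ_{k=0}^{21} (−1)^k (b_k − b_{22}) cos(kx) − (820/33)(1 − cos(x/10)). Then Δ(x) > 0.29 for all x ∈ [5π/8, 2.68]. -/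
open Real

noncomputable def Δ (x : ℝ) : ℝ :=
  (∑ k ∈ Finset.range 22, (-1)^k * (b k - b 22) * cos (k * x))
    - (820/33) * (1 - cos (x/10))

/-!
In the variable `s = -cos x` the cosine sum is the polynomial `∑ (b k - b 22) T_k(s)`, and
`1 - cos (x / 10) ≤ x ^ 2 / 200`. On `[π / 2, 3π / 2]` the function `α - β cos x - x ^ 2` is concave
when `0 ≤ β`, so `x ^ 2 ≤ α + β s` holds on an arc as soon as it holds at its endpoints. On each of
the arcs cut out by `5π/8`, `2π/3`, `3π/4`, `7π/8`, where the cosine is an explicit radical, this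
leaves a polynomial in `s` with rational coefficients; it is bounded below by expanding it at the
left endpoints of two subintervals.
-/

open Polynomial (eval)
open Polynomial.Chebyshev (T)

section CoefficientLists

variable {K : Type*} [Field K]

/-- The value at `x` of the polynomial with rational coefficient list `l`, constant term first.
Lists are used instead of `ℚ[X]` so that `norm_num` can compute the coefficients. -/
def hornerEval : List ℚ → K → K
  | [], _ => 0
  | c :: l, x => c + x * hornerEval l x

/-- The coefficient list of the sum of two polynomials. -/
def coeffAdd : List ℚ → List ℚ → List ℚ
  | [], m => m
  | c :: l, [] => c :: l
  | c :: l, d :: m => (c + d) :: coeffAdd l m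

/-- A lower bound for the polynomial with coefficient list `l` on `[0, w]`, obtained by running
Horner's scheme with each intermediate lower bound multiplied by the worse endpoint of `[0, w]`. -/
def hornerLowerBound (w : ℚ) : List ℚ → ℚ
  | [] => 0
  | c :: l => c + w * min 0 (hornerLowerBound w l)

/-- The coefficient lists of `T_n(a + X)` and `T_{n+1}(a + X)`, for the Chebyshev polynomials
`T_n` of the first kind; carrying both makes the three-term recurrence linear-time. -/
def chebyshevTaylorPair (a : ℚ) : ℕ → List ℚ × List ℚ
  | 0 => ([1], [a, 1])
  | n + 1 =>
    let (p, q) := chebyshevTaylorPair a n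
    (q, coeffAdd (coeffAdd (q.map (2 * a * ·)) (0 :: q.map (2 * ·))) (p.map (-1 * ·)))

/-- The coefficient list of the Chebyshev series `∑ k < n, c k * T_k(a + X)`. -/
def chebyshevSeriesTaylor (c : ℕ → ℚ) (a : ℚ) : ℕ → List ℚ
  | 0 => []
  | n + 1 => coeffAdd (chebyshevSeriesTaylor c a n) ((chebyshevTaylorPair a n).1.map (c n * ·))

theorem hornerLowerBound_le_hornerEval [LinearOrder K] [IsStrictOrderedRing K] {w : ℚ} {x : K}
    (hx₀ : 0 ≤ x) (hxw : x ≤ w) (l : List ℚ) : (hornerLowerBound w l : K) ≤ hornerEval l x := by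
  induction l with
  | nil => simp [hornerLowerBound, hornerEval]
  | cons c l ih =>
    have hmin : min 0 (hornerLowerBound w l : K) ≤ 0 := min_le_left _ _
    have hmul : w * min 0 (hornerLowerBound w l : K) ≤ x * hornerEval l x := calc
      w * min 0 (hornerLowerBound w l : K) ≤ x * min 0 (hornerLowerBound w l : K) :=
        mul_le_mul_of_nonpos_right hxw hmin
      _ ≤ x * hornerEval l x := by gcongr; exact (min_le_right _ _).trans ih
    simpa [hornerLowerBound, hornerEval] using hmul

variable [CharZero K]

theorem hornerEval_coeffAdd (l m : List ℚ) (x : K) :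
    hornerEval (coeffAdd l m) x = hornerEval l x + hornerEval m x := by
  induction l generalizing m with
  | nil => simp [coeffAdd, hornerEval]
  | cons c l ih =>
    cases m with
    | nil => simp [coeffAdd, hornerEval]
    | cons d m =>
      simp only [coeffAdd, hornerEval, ih, Rat.cast_add]
      ring

theorem hornerEval_map_mul (r : ℚ) (l : List ℚ) (x : K) :
    hornerEval (l.map (r * ·)) x = r * hornerEval l x := by
  induction l with
  | nil => simp [hornerEval]
  | cons c l ih =>
    simp only [List.map_cons, hornerEval, ih, Rat.cast_mul]
    ring

theorem hornerEval_chebyshevTaylorPair (a : ℚ) (n : ℕ) (x : K) :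
    hornerEval (chebyshevTaylorPair a n).1 x = eval (a + x) (T K n) ∧
      hornerEval (chebyshevTaylorPair a n).2 x = eval (a + x) (T K (n + 1)) := by
  induction n with
  | zero => simp [chebyshevTaylorPair, hornerEval]
  | succ n ih =>
    refine ⟨by simpa [chebyshevTaylorPair] using ih.2, ?_⟩
    have hT : T K (↑(n + 1) + 1) = 2 * Polynomial.X * T K (n + 1) - T K n := by
      rw [← Polynomial.Chebyshev.T_add_two]
      push_cast
      ring_nf
    simp only [chebyshevTaylorPair, hornerEval_coeffAdd, hornerEval_map_mul, hornerEval, ih.1,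
      ih.2, hT, Polynomial.eval_sub, Polynomial.eval_mul, Polynomial.eval_X, Polynomial.eval_ofNat]
    push_cast
    ring

theorem hornerEval_chebyshevSeriesTaylor (c : ℕ → ℚ) (a : ℚ) (n : ℕ) (x : K) :
    hornerEval (chebyshevSeriesTaylor c a n) x =
      ∑ k ∈ Finset.range n, c k * eval (a + x) (T K k) := by
  induction n with
  | zero => simp [chebyshevSeriesTaylor, hornerEval]
  | succ n ih =>
    rw [Finset.sum_range_succ, ← ih, ← (hornerEval_chebyshevTaylorPair a n x).1,
      ← hornerEval_map_mul, ← hornerEval_coeffAdd, chebyshevSeriesTaylor]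

end CoefficientLists

theorem eval_T_neg_cos (k : ℕ) (x : ℝ) : eval (-cos x) (T ℝ k) = (-1) ^ k * cos (k * x) := by
  rw [Polynomial.Chebyshev.T_eval_neg, Polynomial.Chebyshev.T_real_cos]
  simp [Int.coe_negOnePow_natCast]

theorem concaveOn_neg_cos : ConcaveOn ℝ (Set.Icc (π / 2) (3 * π / 2)) (fun x ↦ -cos x) := by
  have hshift := strictConcaveOn_cos_Icc.concaveOn.translate_left (-π)
  refine (hshift.subset ?_ (convex_Icc _ _)).congr fun x _ ↦ by simp [← sub_eq_add_neg]
  rintro x ⟨hx₁, hx₂⟩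
  exact ⟨by linarith, by linarith⟩

theorem sq_le_add_mul_neg_cos_of_mem_Icc {p q α β x : ℝ} (hp : π / 2 ≤ p) (hq : q ≤ 3 * π / 2)
    (hβ : 0 ≤ β) (hαp : p ^ 2 ≤ α + β * -cos p) (hαq : q ^ 2 ≤ α + β * -cos q)
    (hx : x ∈ Set.Icc p q) : x ^ 2 ≤ α + β * -cos x := by
  have hpq : p ≤ q := hx.1.trans hx.2
  have hconc : ConcaveOn ℝ (Set.Icc p q) (fun y ↦ β * -cos y - y ^ 2) :=
    ((concaveOn_neg_cos.subset (Set.Icc_subset_Icc hp hq) (convex_Icc p q)).smul hβ).sub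
      (even_two.convexOn_pow.subset (Set.subset_univ _) (convex_Icc p q))
  have hmin := hconc.min_le_of_mem_Icc (Set.left_mem_Icc.2 hpq) (Set.right_mem_Icc.2 hpq) hx
  have hends : -α ≤ min (β * -cos p - p ^ 2) (β * -cos q - q ^ 2) :=
    le_min (by linarith) (by linarith)
  linarith

/-- The Vietoris coefficient `b k` as a rational number. -/
def bRat (k : ℕ) : ℚ := (Nat.choose (2 * (k / 2)) (k / 2) : ℚ) / 4 ^ (k / 2)

theorem cast_bRat (k : ℕ) : (bRat k : ℝ) = b k := by
  simp [bRat, b]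

/-- The coefficient list of `∑ k < 22, (b k - b 22) * T_k(a + X) - 41 / 330 * (α + β * (a + X))`,
a lower bound for `Δ` in terms of `-cos x = a + X` on an arc where `x ^ 2 ≤ α - β * cos x`; here
`41 / 330 = 820 / 33 / 200`. -/
def arcTaylor (α β a : ℚ) : List ℚ :=
  coeffAdd (chebyshevSeriesTaylor (fun k ↦ bRat k - bRat 22) a 22)
    [-(41 / 330) * (α + β * a), -(41 / 330) * β]

theorem hornerEval_arcTaylor_le_Δ {α β a : ℚ} {x : ℝ} (hx : x ^ 2 ≤ α + β * -cos x) :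
    hornerEval (arcTaylor α β a) (-cos x - a) ≤ Δ x := by
  have hcos : 1 - (x / 10) ^ 2 / 2 ≤ cos (x / 10) := one_sub_sq_div_two_le_cos
  have hsum : hornerEval (chebyshevSeriesTaylor (fun k ↦ bRat k - bRat 22) a 22) (-cos x - a) =
      ∑ k ∈ Finset.range 22, (-1) ^ k * (b k - b 22) * cos (k * x) := by
    rw [hornerEval_chebyshevSeriesTaylor, add_sub_cancel]
    refine Finset.sum_congr rfl fun k _ ↦ ?_
    rw [eval_T_neg_cos, Rat.cast_sub, cast_bRat, cast_bRat]
    ring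
  rw [arcTaylor, hornerEval_coeffAdd, hsum, Δ]
  simp only [hornerEval]
  push_cast
  linarith

theorem lt_Δ_of_lt_hornerLowerBound {α β lo hi c : ℚ} {x : ℝ} (hx : x ^ 2 ≤ α + β * -cos x)
    (hlo : lo ≤ -cos x) (hhi : -cos x ≤ hi)
    (hc : c < hornerLowerBound (hi - lo) (arcTaylor α β lo)) : c < Δ x := calc
  (c : ℝ) < hornerLowerBound (hi - lo) (arcTaylor α β lo) := mod_cast hc
  _ ≤ hornerEval (arcTaylor α β lo) (-cos x - lo) :=
    hornerLowerBound_le_hornerEval (by linarith) (by push_cast; linarith) _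
  _ ≤ Δ x := hornerEval_arcTaylor_le_Δ hx

theorem lt_Δ_of_mem_arc {p q : ℝ} {lo mid hi α β c : ℚ} (hp : π / 2 ≤ p) (hq : q ≤ π)
    (hβ : 0 ≤ β) (hlo : lo ≤ -cos p) (hhi : -cos q ≤ hi)
    (hαp : p ^ 2 ≤ α + β * -cos p) (hαq : q ^ 2 ≤ α + β * -cos q)
    (hleft : c < hornerLowerBound (mid - lo) (arcTaylor α β lo))
    (hright : c < hornerLowerBound (hi - mid) (arcTaylor α β mid))
    {x : ℝ} (hx : x ∈ Set.Icc p q) : c < Δ x := by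
  have hπ := pi_pos
  have hsq : x ^ 2 ≤ α + β * -cos x :=
    sq_le_add_mul_neg_cos_of_mem_Icc hp (by linarith) (mod_cast hβ) hαp hαq hx
  have hpx : cos x ≤ cos p := cos_le_cos_of_nonneg_of_le_pi (by linarith) (hx.2.trans hq) hx.1
  have hxq : cos q ≤ cos x := cos_le_cos_of_nonneg_of_le_pi (by linarith [hx.1]) hq hx.2
  rcases le_total (-cos x) mid with hmid | hmid
  · exact lt_Δ_of_lt_hornerLowerBound hsq (by linarith) hmid hleft
  · exact lt_Δ_of_lt_hornerLowerBound hsq hmid (by linarith) hright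

theorem pi_sq_lt : π ^ 2 < 9.8697 := by
  nlinarith [pi_lt_d4, pi_pos]

theorem neg_cos_five_pi_div_eight : -cos (5 * π / 8) = sin (π / 8) := by
  rw [show 5 * π / 8 = π / 8 + π / 2 by ring, cos_add_pi_div_two, neg_neg]

theorem neg_cos_two_pi_div_three : -cos (2 * π / 3) = 1 / 2 := by
  rw [show 2 * π / 3 = π - π / 3 by ring, cos_pi_sub, neg_neg, cos_pi_div_three]

theorem neg_cos_three_pi_div_four : -cos (3 * π / 4) = √2 / 2 := by
  rw [show 3 * π / 4 = π - π / 4 by ring, cos_pi_sub, neg_neg, cos_pi_div_four]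

theorem neg_cos_seven_pi_div_eight : -cos (7 * π / 8) = cos (π / 8) := by
  rw [show 7 * π / 8 = π - π / 8 by ring, cos_pi_sub, neg_neg]

theorem sqrt_two_mem_Ioo : √2 ∈ Set.Ioo 1.414 1.415 :=
  ⟨by rw [lt_sqrt] <;> norm_num, by rw [sqrt_lt'] <;> norm_num⟩

theorem lt_sin_pi_div_eight : 0.381 < sin (π / 8) := by
  have hsqrt : 0.762 < √(2 - √2) := lt_sqrt_of_sq_lt (by linarith [sqrt_two_mem_Ioo.2])
  rw [sin_pi_div_eight]
  linarith

theorem cos_pi_div_eight_mem_Ioo : cos (π / 8) ∈ Set.Ioo 0.921 0.93 := by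
  have hlower : 1.842 < √(2 + √2) := lt_sqrt_of_sq_lt (by linarith [sqrt_two_mem_Ioo.1])
  have hupper : √(2 + √2) < 1.86 :=
    (sqrt_lt' (by norm_num)).2 (by linarith [sqrt_two_mem_Ioo.2])
  rw [cos_pi_div_eight]
  constructor <;> linarith

section Arcs

-- The lines `α + β s` are the chords of `x ^ 2`, as a function of `s = -cos x`, rounded upwards.

attribute [local simp] arcTaylor chebyshevSeriesTaylor chebyshevTaylorPair coeffAdd
  hornerLowerBound bRat Nat.choose min_def

theorem lt_Δ_of_mem_Icc_five_pi_div_eight_two_pi_div_three {x : ℝ}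
    (hx : x ∈ Set.Icc (5 * π / 8) (2 * π / 3)) : ((0.29 : ℚ) : ℝ) < Δ x := by
  refine lt_Δ_of_mem_arc (lo := 0.38) (mid := 0.44) (hi := 0.5) (α := 2.13) (β := 4.53)
    (by linarith [pi_pos]) (by linarith [pi_pos]) (by norm_num) ?_ ?_ ?_ ?_
    (by norm_num) (by norm_num) hx
  all_goals
    push_cast
    simp only [neg_cos_five_pi_div_eight, neg_cos_two_pi_div_three]
    linarith [pi_sq_lt, lt_sin_pi_div_eight]

theorem lt_Δ_of_mem_Icc_two_pi_div_three_three_pi_div_four {x : ℝ}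
    (hx : x ∈ Set.Icc (2 * π / 3) (3 * π / 4)) : ((0.29 : ℚ) : ℝ) < Δ x := by
  refine lt_Δ_of_mem_arc (lo := 0.5) (mid := 0.6) (hi := 0.71) (α := 1.6) (β := 5.6)
    (by linarith [pi_pos]) (by linarith [pi_pos]) (by norm_num) ?_ ?_ ?_ ?_
    (by norm_num) (by norm_num) hx
  all_goals
    push_cast
    simp only [neg_cos_two_pi_div_three, neg_cos_three_pi_div_four]
    linarith [pi_sq_lt, sqrt_two_mem_Ioo.1, sqrt_two_mem_Ioo.2]

theorem lt_Δ_of_mem_Icc_three_pi_div_four_seven_pi_div_eight {x : ℝ}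
    (hx : x ∈ Set.Icc (3 * π / 4) (7 * π / 8)) : ((0.29 : ℚ) : ℝ) < Δ x := by
  refine lt_Δ_of_mem_arc (lo := 0.7) (mid := 0.8) (hi := 0.93) (α := -1) (β := 9.3)
    (by linarith [pi_pos]) (by linarith [pi_pos]) (by norm_num) ?_ ?_ ?_ ?_
    (by norm_num) (by norm_num) hx
  all_goals
    push_cast
    simp only [neg_cos_three_pi_div_four, neg_cos_seven_pi_div_eight]
    linarith [pi_sq_lt, sqrt_two_mem_Ioo.1, cos_pi_div_eight_mem_Ioo.1, cos_pi_div_eight_mem_Ioo.2]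

end Arcs

theorem lemma8_a_general : ∀ x ∈ Set.Icc (5 * π / 8 : ℝ) (7 * π / 8), Δ x > 0.29 := by
  rintro x ⟨hx₁, hx₂⟩
  rw [gt_iff_lt, show (0.29 : ℝ) = ((0.29 : ℚ) : ℝ) by norm_num]
  rcases le_total x (2 * π / 3) with hx_two_thirds | hx_two_thirds
  · exact lt_Δ_of_mem_Icc_five_pi_div_eight_two_pi_div_three ⟨hx₁, hx_two_thirds⟩
  rcases le_total x (3 * π / 4) with hx_three_fourths | hx_three_fourths
  · exact lt_Δ_of_mem_Icc_two_pi_div_three_three_pi_div_four ⟨hx_two_thirds, hx_three_fourths⟩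
  · exact lt_Δ_of_mem_Icc_three_pi_div_four_seven_pi_div_eight ⟨hx_three_fourths, hx₂⟩

theorem lemma8_a : ∀ x ∈ Set.Icc (5 * π / 8 : ℝ) 2.68, Δ x > 0.29 :=
  fun x hx ↦ lemma8_a_general x ⟨hx.1, by linarith [hx.2, pi_gt_d2]⟩
end

section
/- With Δ(x) = Σ_{k=0}^{21} (−1)^k (b_k − b_{22}) cos(kx) − (820/33)(1 − cos(x/10)), where b_{2k} = b_{2k+1} = 4^{−k}·binomial(2k,k): Δ(x) > 0.46 for all x ∈ [2.68, 2.83]. -/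
open Real

/-!
With `y = π - x` the signs disappear: the sum becomes `∑ (b k - b 22) * cos (k * y)`, the real
part of a partial sum at `z = exp (y * I)`. The numbers `b (2 * m)` are the Taylor coefficients of
`(1 - w) ^ (-1 / 2)`, so the full series at `z` would be `(1 + z) * (1 - z ^ 2) ^ (-1 / 2)`, whose
real part is `cos (y / 2) / √(sin y)`. Since `b (2 * m)` and its successive differences decrease,
two summations by parts control the tail on the closed unit disc away from `1`, with an error
proportional to `b 22 - b 24 = b 22 / 24`. Each of the remaining terms is then elementary; for
larger `y` the error term is small because `cos (45 / 2 * y) ≤ -1 / 2`.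
-/

section AbelSummation

lemma hasSum_sub_succ_mul_pow {𝕜 : Type*} [NormedField 𝕜] {a : ℕ → 𝕜} {w A : 𝕜}
    (h : HasSum (fun m ↦ a m * w ^ m) A) :
    HasSum (fun m ↦ (a m - a (m + 1)) * w ^ (m + 1)) (a 0 - (1 - w) * A) := by
  have h_succ : HasSum (fun m ↦ a (m + 1) * w ^ (m + 1)) (A - a 0) := by
    simpa using (hasSum_nat_add_iff' 1).mpr h
  convert! (h.mul_left w).sub h_succ using 1
  · ext m; ring
  · ring

variable {a : ℕ → ℝ} {w : ℂ}

lemma summable_mul_norm_pow_of_antitone (ha : Antitone a) (ha₀ : ∀ m, 0 ≤ a m) (hw : ‖w‖ < 1) :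
    Summable fun m ↦ a m * ‖w‖ ^ m :=
  .of_nonneg_of_le (fun m ↦ mul_nonneg (ha₀ m) (by positivity))
    (fun m ↦ mul_le_mul_of_nonneg_right (ha m.zero_le) (by positivity))
    ((summable_geometric_of_lt_one (norm_nonneg w) hw).mul_left (a 0))

lemma summable_mul_pow_of_antitone (ha : Antitone a) (ha₀ : ∀ m, 0 ≤ a m) (hw : ‖w‖ < 1) :
    Summable fun m ↦ (a m : ℂ) * w ^ m :=
  .of_norm <| by simpa [abs_of_nonneg, ha₀] using summable_mul_norm_pow_of_antitone ha ha₀ hw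

lemma norm_sub_one_sub_mul_le_of_antitone {A : ℂ} (ha : Antitone a) (ha₀ : ∀ m, 0 ≤ a m)
    (hw : ‖w‖ < 1) (hA : HasSum (fun m ↦ (a m : ℂ) * w ^ m) A) :
    ‖(a 0 : ℂ) - (1 - w) * A‖ ≤ a 0 := by
  have h_norm := (summable_mul_norm_pow_of_antitone ha ha₀ hw).hasSum
  have h_nonneg : 0 ≤ ∑' m, a m * ‖w‖ ^ m :=
    h_norm.nonneg fun m ↦ mul_nonneg (ha₀ m) (by positivity)
  calc ‖(a 0 : ℂ) - (1 - w) * A‖ ≤ a 0 - (1 - ‖w‖) * ∑' m, a m * ‖w‖ ^ m := by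
        refine (hasSum_sub_succ_mul_pow hA).norm_le_of_bounded
          (hasSum_sub_succ_mul_pow h_norm) fun m ↦ ?_
        rw [norm_mul, norm_pow, ← Complex.ofReal_sub, Complex.norm_of_nonneg]
        exact sub_nonneg.mpr (ha m.le_succ)
    _ ≤ a 0 := by nlinarith

lemma norm_one_sub_sq_mul_sub_le {A : ℂ} (ha : Antitone a)
    (ha' : Antitone fun m ↦ a m - a (m + 1)) (hw : ‖w‖ < 1)
    (hA : HasSum (fun m ↦ (a m : ℂ) * w ^ m) A) :
    ‖(1 - w) ^ 2 * A - ((1 - w) * a 0 - w * (a 0 - a 1))‖ ≤ a 0 - a 1 := by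
  have h_nonneg (m : ℕ) : 0 ≤ a m - a (m + 1) := sub_nonneg.mpr (ha m.le_succ)
  obtain ⟨U, hU⟩ := summable_mul_pow_of_antitone ha' h_nonneg hw
  have hU_mul : w * U = a 0 - (1 - w) * A := by
    refine (hU.mul_left w).unique ?_
    convert! hasSum_sub_succ_mul_pow hA using 2 with m
    push_cast
    ring
  have h_factor : (1 - w) ^ 2 * A - ((1 - w) * a 0 - w * (a 0 - a 1)) =
      w * (((a 0 - a 1 : ℝ) : ℂ) - (1 - w) * U) := by
    push_cast
    linear_combination (1 - w) * hU_mul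
  rw [h_factor, norm_mul]
  exact (mul_le_of_le_one_left (norm_nonneg _) hw.le).trans
    (norm_sub_one_sub_mul_le_of_antitone ha' h_nonneg hw hU)

/-- What is left of `(1 - w) ^ 2` times the tail from the `n`-th term on of a power series
`∑ a m * w ^ m` with sum `A`, after removing the boundary terms of two summations by parts. -/
noncomputable def abelRemainder (a : ℕ → ℝ) (A w : ℂ) (n : ℕ) : ℂ :=
  (1 - w) ^ 2 * (A - ∑ m ∈ Finset.range n, a m * w ^ m) -
    w ^ n * ((1 - w) * a n - w * (a n - a (n + 1)))

lemma norm_abelRemainder_le {A : ℂ} (ha : Antitone a) (ha₀ : ∀ m, 0 ≤ a m)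
    (ha' : Antitone fun m ↦ a m - a (m + 1)) (hw : ‖w‖ < 1)
    (hA : HasSum (fun m ↦ (a m : ℂ) * w ^ m) A) (n : ℕ) :
    ‖abelRemainder a A w n‖ ≤ a n - a (n + 1) := by
  have h_shift : Antitone fun m ↦ a (m + n) := fun i j hij ↦ ha (by lia)
  have h_shift' : Antitone fun m ↦ a (m + n) - a (m + 1 + n) := fun i j hij ↦ by
    simpa [add_right_comm] using ha' (Nat.add_le_add_right hij n)
  obtain ⟨T, hT⟩ := summable_mul_pow_of_antitone h_shift (fun m ↦ ha₀ _) hw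
  have hT_mul : w ^ n * T = A - ∑ m ∈ Finset.range n, a m * w ^ m := by
    refine (hT.mul_left (w ^ n)).unique ?_
    convert! (hasSum_nat_add_iff' n).mpr hA using 2 with m
    ring
  have h_factor : abelRemainder a A w n =
      w ^ n * ((1 - w) ^ 2 * T - ((1 - w) * a n - w * (a n - a (n + 1)))) := by
    rw [abelRemainder, ← hT_mul]
    ring
  rw [h_factor, norm_mul, norm_pow]
  refine (mul_le_of_le_one_left (norm_nonneg _) (pow_le_one₀ (norm_nonneg w) hw.le)).trans ?_
  simpa [add_comm] using norm_one_sub_sq_mul_sub_le h_shift h_shift' hw hT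

end AbelSummation

section Coefficients

lemma succ_mul_ringChoose_succ {K : Type*} [Field K] [CharZero K] (r : K) (m : ℕ) :
    (m + 1) * Ring.choose r (m + 1) = (r - m) * Ring.choose r m := by
  have hm : (m : K) + 1 ≠ 0 := by exact_mod_cast m.succ_ne_zero
  simp only [Ring.choose_eq_smul, descPochhammer_succ_right, Polynomial.smeval_mul,
    Polynomial.smeval_sub, Polynomial.smeval_X, Polynomial.smeval_natCast, Nat.factorial_succ,
    Nat.cast_mul, Nat.cast_add, Nat.cast_one, mul_inv_rev, pow_one, pow_zero, nsmul_eq_mul, mul_one,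
    smul_eq_mul]
  field_simp

lemma b_two_mul (m : ℕ) : b (2 * m) = m.centralBinom / 4 ^ m := by
  simp [b, Nat.centralBinom]

lemma b_two_mul_add_one (m : ℕ) : b (2 * m + 1) = b (2 * m) := by
  simp [b, show (2 * m + 1) / 2 = m by lia]

lemma b_pos (k : ℕ) : 0 < b k := by
  have := Nat.choose_pos (show k / 2 ≤ 2 * (k / 2) by lia)
  unfold b
  positivity

lemma b_two_mul_succ (m : ℕ) : b (2 * (m + 1)) = b (2 * m) * ((2 * m + 1) / (2 * m + 2)) := by
  have h : ((m : ℝ) + 1) * (m + 1).centralBinom = 2 * (2 * m + 1) * m.centralBinom := by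
    exact_mod_cast Nat.succ_mul_centralBinom_succ m
  rw [b_two_mul, b_two_mul, div_mul_div_comm, div_eq_div_iff (by positivity) (by positivity)]
  linear_combination 2 * 4 ^ m * h

lemma b_two_mul_sub_succ (m : ℕ) : b (2 * m) - b (2 * (m + 1)) = b (2 * m) / (2 * m + 2) := by
  rw [b_two_mul_succ]
  field_simp
  ring

lemma antitone_b_two_mul : Antitone fun m ↦ b (2 * m) :=
  antitone_nat_of_succ_le fun m ↦ sub_nonneg.mp <| by
    rw [b_two_mul_sub_succ]
    exact div_nonneg (b_pos _).le (by positivity)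

lemma antitone_b_two_mul_sub_succ : Antitone fun m ↦ b (2 * m) - b (2 * (m + 1)) := by
  intro i j hij
  simp only [b_two_mul_sub_succ]
  exact div_le_div₀ (b_pos _).le (antitone_b_two_mul hij) (by positivity) (by gcongr)

lemma ringChoose_neg_half (m : ℕ) : Ring.choose (-1 / 2 : ℂ) m = (-1) ^ m * b (2 * m) := by
  induction m with
  | zero => simp [b]
  | succ m ih =>
    have hm : (m : ℂ) + 1 ≠ 0 := by exact_mod_cast m.succ_ne_zero
    apply mul_left_cancel₀ hm
    rw [succ_mul_ringChoose_succ, ih, b_two_mul_succ]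
    push_cast
    field_simp
    ring

lemma hasSum_b_two_mul_mul_pow {w : ℂ} (hw : ‖w‖ < 1) :
    HasSum (fun m ↦ (b (2 * m) : ℂ) * w ^ m) ((1 - w) ^ (-1 / 2 : ℂ)) := by
  have h := (Complex.one_add_cpow_hasFPowerSeriesOnBall_zero (a := -1 / 2)).hasSum
    (y := -w) (by simpa [← ENNReal.ofReal_one])
  convert! h using 2 with m
  · have h_sign : (-1 : ℂ) ^ m * (-1) ^ m = 1 := pow_mul_pow_eq_one _ (by norm_num)
    simp only [binomialSeries_apply, ringChoose_neg_half, List.ofFn_const, List.prod_replicate,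
      neg_pow w, smul_eq_mul]
    linear_combination -(b (2 * m) * w ^ m) * h_sign
  · ring

end Coefficients

section Circle

open Complex (I)

lemma one_sub_mem_slitPlane {w : ℂ} (hw : ‖w‖ ≤ 1) (hw₁ : w ≠ 1) : 1 - w ∈ Complex.slitPlane := by
  have h_re : w.re ≤ 1 := (Complex.re_le_norm w).trans hw
  simp only [Complex.mem_slitPlane_iff, Complex.sub_re, Complex.one_re, Complex.sub_im,
    Complex.one_im, sub_pos, zero_sub, neg_ne_zero]
  by_contra! h
  exact hw₁ (Complex.ext (le_antisymm h_re h.1) h.2)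

lemma norm_abelRemainder_b_two_mul_le {w : ℂ} (hw : ‖w‖ ≤ 1) (hw₁ : w ≠ 1) (n : ℕ) :
    ‖abelRemainder (fun m ↦ b (2 * m)) ((1 - w) ^ (-1 / 2 : ℂ)) w n‖ ≤
      b (2 * n) - b (2 * (n + 1)) := by
  have h_closure : w ∈ closure (Metric.ball (0 : ℂ) 1) := by
    simpa [closure_ball (0 : ℂ) one_ne_zero] using hw
  have h_slit := one_sub_mem_slitPlane hw hw₁
  have h_cont : ContinuousAt
      (fun v ↦ ‖abelRemainder (fun m ↦ b (2 * m)) ((1 - v) ^ (-1 / 2 : ℂ)) v n‖) w := by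
    unfold abelRemainder
    fun_prop (disch := assumption)
  refine h_cont.continuousWithinAt.closure_le h_closure continuousWithinAt_const fun v hv ↦ ?_
  have hv : ‖v‖ < 1 := by simpa using hv
  exact norm_abelRemainder_le antitone_b_two_mul (fun m ↦ (b_pos _).le)
    antitone_b_two_mul_sub_succ hv (hasSum_b_two_mul_mul_pow hv) n

lemma one_sub_exp_two_mul_mul_I (θ : ℂ) :
    1 - Complex.exp (2 * θ * I) = -2 * I * Complex.sin θ * Complex.exp (θ * I) := by
  rw [Complex.exp_mul_I, Complex.exp_mul_I, Complex.cos_two_mul, Complex.sin_two_mul]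
  linear_combination -2 * Complex.cos_sq_add_sin_sq θ + 2 * Complex.sin θ ^ 2 * Complex.I_sq

lemma one_add_exp_two_mul_mul_I (θ : ℂ) :
    1 + Complex.exp (2 * θ * I) = 2 * Complex.cos θ * Complex.exp (θ * I) := by
  rw [Complex.exp_mul_I, Complex.exp_mul_I, Complex.cos_two_mul, Complex.sin_two_mul]
  ring

lemma one_sub_exp_mul_one_sub_exp_two_mul (θ : ℂ) :
    (1 - Complex.exp (θ * I)) * (1 - Complex.exp (2 * θ * I)) =
      -(4 * Complex.sin (θ / 2) * Complex.sin θ) * Complex.exp (3 / 2 * θ * I) := by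
  have h_half := one_sub_exp_two_mul_mul_I (θ / 2)
  have h_exp : Complex.exp (3 / 2 * θ * I) = Complex.exp (θ / 2 * I) * Complex.exp (θ * I) := by
    rw [← Complex.exp_add]; ring_nf
  rw [mul_div_cancel₀ θ two_ne_zero] at h_half
  rw [h_half, one_sub_exp_two_mul_mul_I, h_exp]
  linear_combination
    4 * Complex.sin (θ / 2) * Complex.sin θ * Complex.exp (θ / 2 * I) * Complex.exp (θ * I) *
      Complex.I_sq

lemma ofReal_mul_exp_mul_I_cpow {r θ : ℝ} (hr : 0 < r) (hθ : θ ∈ Set.Ioc (-π) π) (s : ℂ) :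
    (r * Complex.exp (θ * I)) ^ s = r ^ s * Complex.exp (s * θ * I) := by
  have hr' : (r : ℂ) ≠ 0 := by exact_mod_cast hr.ne'
  have h_exp : r * Complex.exp (θ * I) = Complex.exp (Complex.log r + θ * I) := by
    rw [Complex.exp_add, Complex.exp_log hr']
  have h_im : (Complex.log r + θ * I).im = θ := by
    simp [Complex.log_im, Complex.arg_ofReal_of_nonneg hr.le]
  rw [h_exp, Complex.cpow_def_of_ne_zero (Complex.exp_ne_zero _), Complex.cpow_def_of_ne_zero hr',
    Complex.log_exp (by rw [h_im]; exact hθ.1) (by rw [h_im]; exact hθ.2), ← Complex.exp_add]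
  ring_nf

variable {y : ℝ}

lemma one_sub_exp_cpow_neg_half (hy₀ : 0 < y) (hy₁ : y < π) :
    (1 - Complex.exp (2 * y * I)) ^ (-1 / 2 : ℂ) =
      (√(2 * sin y))⁻¹ * Complex.exp ((π / 4 - y / 2) * I) := by
  have h_sin : 0 < 2 * sin y := by linarith [sin_pos_of_pos_of_lt_pi hy₀ hy₁]
  have h_polar : 1 - Complex.exp (2 * y * I) =
      (2 * sin y : ℝ) * Complex.exp ((y - π / 2 : ℝ) * I) := by
    rw [one_sub_exp_two_mul_mul_I]
    push_cast
    rw [sub_mul, Complex.exp_sub, Complex.exp_pi_div_two_mul_I, Complex.div_I]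
    ring
  have h_sqrt : ((2 * sin y : ℝ) : ℂ) ^ (-1 / 2 : ℂ) = ((√(2 * sin y))⁻¹ : ℝ) := by
    rw [sqrt_eq_rpow, ← rpow_neg h_sin.le, Complex.ofReal_cpow h_sin.le]
    push_cast
    ring_nf
  rw [h_polar, ofReal_mul_exp_mul_I_cpow h_sin ⟨by linarith, by linarith⟩, h_sqrt]
  push_cast
  ring_nf

lemma re_one_add_exp_mul_one_sub_exp_cpow (hy₀ : 0 < y) (hy₁ : y < π) :
    ((1 + Complex.exp (y * I)) *
      (1 - Complex.exp (2 * y * I)) ^ (-1 / 2 : ℂ)).re = cos (y / 2) / √(sin y) := by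
  have h_add := one_add_exp_two_mul_mul_I (y / 2)
  rw [mul_div_cancel₀ (y : ℂ) two_ne_zero] at h_add
  have h_eq : (1 + Complex.exp (y * I)) *
      (1 - Complex.exp (2 * y * I)) ^ (-1 / 2 : ℂ) =
      (2 * cos (y / 2) * (√(2 * sin y))⁻¹ : ℝ) * Complex.exp ((π / 4 : ℝ) * I) := by
    rw [h_add, one_sub_exp_cpow_neg_half hy₀ hy₁,
      show ((π / 4 : ℝ) : ℂ) * I = y / 2 * I + (π / 4 - y / 2) * I by
        push_cast; ring, Complex.exp_add]
    push_cast
    ring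
  rw [h_eq, Complex.re_ofReal_mul, Complex.exp_ofReal_mul_I_re, cos_pi_div_four,
    sqrt_mul zero_le_two]
  field_simp

lemma sum_range_two_mul_b_mul_pow (z : ℂ) (n : ℕ) :
    ∑ k ∈ Finset.range (2 * n), b k * z ^ k =
      (1 + z) * ∑ m ∈ Finset.range n, b (2 * m) * (z ^ 2) ^ m := by
  induction n with
  | zero => simp
  | succ n ih =>
    rw [mul_add_one, Finset.sum_range_succ, Finset.sum_range_succ, ih, Finset.sum_range_succ,
      b_two_mul_add_one]
    ring

lemma sum_range_two_mul_b_sub_mul_pow {z : ℂ} (hz : z ^ 2 ≠ 1) (A : ℂ) (n : ℕ) :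
    ∑ k ∈ Finset.range (2 * n), (b k - b (2 * n)) * z ^ k =
      (1 + z) * A - b (2 * n) / (1 - z) -
        (abelRemainder (fun m ↦ b (2 * m)) A (z ^ 2) n -
          (z ^ 2) ^ (n + 1) * (b (2 * n) - b (2 * (n + 1)))) / ((1 - z) * (1 - z ^ 2)) := by
  have hz₁ : z ≠ 1 := by rintro rfl; simp at hz
  have h_sub : 1 - z ≠ 0 := sub_ne_zero.mpr hz₁.symm
  have h_sub_sq : 1 - z ^ 2 ≠ 0 := sub_ne_zero.mpr hz.symm
  simp only [sub_mul, Finset.sum_sub_distrib, ← Finset.mul_sum, sum_range_two_mul_b_mul_pow]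
  rw [geom_sum_eq hz₁, ← neg_div_neg_eq, neg_sub, neg_sub, abelRemainder]
  field_simp
  ring

lemma re_inv_one_sub_of_norm_eq_one {z : ℂ} (hz : ‖z‖ = 1) (hz₁ : z ≠ 1) :
    ((1 - z)⁻¹).re = 1 / 2 := by
  have h_normSq : z.re * z.re + z.im * z.im = 1 := by
    rw [← Complex.normSq_apply, Complex.normSq_eq_norm_sq, hz, one_pow]
  have h_two : Complex.normSq (1 - z) = 2 * (1 - z).re := by
    simp only [Complex.normSq_apply, Complex.sub_re, Complex.sub_im, Complex.one_re, Complex.one_im]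
    linear_combination h_normSq
  have h_ne : Complex.normSq (1 - z) ≠ 0 :=
    Complex.normSq_eq_zero.not.mpr (sub_ne_zero.mpr hz₁.symm)
  rw [Complex.inv_re, div_eq_div_iff h_ne two_ne_zero]
  linear_combination -h_two

lemma re_sub_div_one_sub_exp_mul_le {R : ℂ} {δ : ℝ} (hR : ‖R‖ ≤ δ) (hy₀ : 0 < y) (hy₁ : y < π)
    (n : ℕ) :
    ((R - Complex.exp (2 * y * I) ^ (n + 1) * δ) /
      ((1 - Complex.exp (y * I)) * (1 - Complex.exp (2 * y * I)))).re ≤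
      δ * (1 + cos ((2 * n + 1 / 2) * y)) / (4 * sin (y / 2) * sin y) := by
  have h_sin : 0 < sin y := sin_pos_of_pos_of_lt_pi hy₀ hy₁
  have h_sin_half : 0 < sin (y / 2) := sin_pos_of_pos_of_lt_pi (by linarith) (by linarith)
  set u := Complex.exp ((3 / 2 * y : ℝ) * I) with hu
  have h_pow : Complex.exp (2 * y * I) ^ (n + 1) =
      Complex.exp (((2 * n + 1 / 2) * y : ℝ) * I) * u := by
    rw [hu, ← Complex.exp_nat_mul, ← Complex.exp_add]
    push_cast
    ring_nf
  have h_prod : (1 - Complex.exp (y * I)) * (1 - Complex.exp (2 * y * I)) =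
      -(4 * sin (y / 2) * sin y : ℝ) * u := by
    rw [one_sub_exp_mul_one_sub_exp_two_mul, hu]
    push_cast
    rfl
  have h_eq : (R - Complex.exp (2 * y * I) ^ (n + 1) * δ) /
      ((1 - Complex.exp (y * I)) * (1 - Complex.exp (2 * y * I))) =
      (δ * Complex.exp (((2 * n + 1 / 2) * y : ℝ) * I) + -(R / u)) /
        (4 * sin (y / 2) * sin y : ℝ) := by
    have hu₀ : u ≠ 0 := Complex.exp_ne_zero _
    have h_denom : ((4 * sin (y / 2) * sin y : ℝ) : ℂ) ≠ 0 := by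
      exact_mod_cast (show 0 < 4 * sin (y / 2) * sin y by positivity).ne'
    rw [h_pow, h_prod]
    field_simp
    ring
  have h_rot : (-(R / u)).re ≤ δ := by
    refine (Complex.re_le_norm _).trans ?_
    rwa [norm_neg, norm_div, Complex.norm_exp_ofReal_mul_I, div_one]
  rw [h_eq, Complex.div_ofReal_re, Complex.add_re, Complex.re_ofReal_mul,
    Complex.exp_ofReal_mul_I_re]
  gcongr
  linarith

lemma le_sum_range_two_mul_b_sub_mul_cos (hy₀ : 0 < y) (hy₁ : y < π) (n : ℕ) :
    cos (y / 2) / √(sin y) - b (2 * n) / 2 -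
        (b (2 * n) - b (2 * (n + 1))) * (1 + cos ((2 * n + 1 / 2) * y)) /
          (4 * sin (y / 2) * sin y) ≤
      ∑ k ∈ Finset.range (2 * n), (b k - b (2 * n)) * cos (k * y) := by
  set z := Complex.exp (y * I) with hz
  have hz_norm : ‖z‖ = 1 := Complex.norm_exp_ofReal_mul_I y
  have hz_sq : z ^ 2 = Complex.exp (2 * y * I) := by
    rw [hz, ← Complex.exp_nat_mul]; push_cast; ring_nf
  have hz_sq_ne : z ^ 2 ≠ 1 := by
    have h_sin : Complex.sin y ≠ 0 := by
      exact_mod_cast (sin_pos_of_pos_of_lt_pi hy₀ hy₁).ne'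
    rw [← sub_ne_zero, ← neg_ne_zero, neg_sub, hz_sq, one_sub_exp_two_mul_mul_I]
    simp [h_sin]
  have hz_ne : z ≠ 1 := fun h ↦ hz_sq_ne (by rw [h, one_pow])
  have h_re : ∑ k ∈ Finset.range (2 * n), (b k - b (2 * n)) * cos (k * y) =
      (∑ k ∈ Finset.range (2 * n), ((b k - b (2 * n)) * z ^ k : ℂ)).re := by
    rw [Complex.re_sum]
    refine Finset.sum_congr rfl fun k _ ↦ ?_
    rw [hz, ← Complex.exp_nat_mul, ← mul_assoc, ← Complex.ofReal_natCast, ← Complex.ofReal_mul,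
      ← Complex.ofReal_sub, Complex.re_ofReal_mul, Complex.exp_ofReal_mul_I_re]
  have h_remainder := norm_abelRemainder_b_two_mul_le (w := z ^ 2) (by simp [hz_norm]) hz_sq_ne n
  have h_bound := re_sub_div_one_sub_exp_mul_le h_remainder hy₀ hy₁ n
  rw [h_re, sum_range_two_mul_b_sub_mul_pow hz_sq_ne ((1 - z ^ 2) ^ (-1 / 2 : ℂ)),
    Complex.sub_re, Complex.sub_re, div_eq_mul_inv (b (2 * n) : ℂ), Complex.re_ofReal_mul,
    re_inv_one_sub_of_norm_eq_one hz_norm hz_ne, hz_sq, hz,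
    re_one_add_exp_mul_one_sub_exp_cpow hy₀ hy₁]
  rw [hz_sq] at h_bound
  push_cast at h_bound
  linarith

end Circle

section Numerics

lemma Δ_pi_sub (y : ℝ) :
    Δ (π - y) = ∑ k ∈ Finset.range 22, (b k - b 22) * cos (k * y) -
      820 / 33 * (1 - cos ((π - y) / 10)) := by
  have h_term (k : ℕ) :
      (-1) ^ k * (b k - b 22) * cos (k * (π - y)) = (b k - b 22) * cos (k * y) := by
    have h_sign : (-1 : ℝ) ^ k * (-1) ^ k = 1 := pow_mul_pow_eq_one _ (by norm_num)
    rw [mul_sub (k : ℝ), cos_nat_mul_pi_sub]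
    linear_combination (b k - b 22) * cos (k * y) * h_sign
  simp only [Δ, h_term]

lemma b_twenty_two : b 22 = 88179 / 524288 := by
  norm_num [b, Nat.choose]

variable {y : ℝ}

lemma le_Δ_pi_sub (hy₀ : 0 < y) (hy₁ : y < π) :
    cos (y / 2) / √(sin y) - b 22 / 2 -
        b 22 / 96 * ((1 + cos (45 / 2 * y)) / (sin (y / 2) * sin y)) -
        41 / 330 * (π - y) ^ 2 ≤ Δ (π - y) := by
  have h_sum := le_sum_range_two_mul_b_sub_mul_cos hy₀ hy₁ 11
  have h_cos := one_sub_sq_div_two_le_cos (x := (π - y) / 10)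
  have h_phase : (2 * (11 : ℕ) + 1 / 2) * y = 45 / 2 * y := by norm_num
  have h_coeff : b 22 / (2 * (11 : ℕ) + 2) * (1 + cos (45 / 2 * y)) / (4 * sin (y / 2) * sin y) =
      b 22 / 96 * ((1 + cos (45 / 2 * y)) / (sin (y / 2) * sin y)) := by
    push_cast
    ring
  rw [b_two_mul_sub_succ, h_phase, h_coeff] at h_sum
  rw [Δ_pi_sub]
  linarith

-- A line just below the tangent at the right endpoint.
lemma le_cos_half_div_sqrt_sin (hy₀ : 0.31 ≤ y) (hy₁ : y ≤ 0.4616) :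
    2.192 - 1.6 * y ≤ cos (y / 2) / √(sin y) := by
  have h_sin : 0 < sin y := sin_pos_of_pos_of_lt_pi (by linarith) (by linarith [pi_gt_three])
  have h_sin_le : sin y ≤ y - y ^ 3 / 6 + 0.00025 := by
    have h_abs : |y| = y := abs_of_nonneg (by linarith)
    have h_taylor := sin_bound (x := y) (by linarith)
    have h_error : y ^ 5 ≤ 0.4616 ^ 5 := by gcongr
    rw [h_abs] at h_taylor
    linarith [le_of_abs_le h_taylor]
  have h_cos : 1 - y ^ 2 / 4 ≤ cos (y / 2) ^ 2 := by
    have h := one_sub_sq_div_two_le_cos (x := y)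
    rw [cos_sq, mul_div_cancel₀ y two_ne_zero]
    linarith
  have h_poly : (2.192 - 1.6 * y) ^ 2 * (y - y ^ 3 / 6 + 0.00025) ≤ 1 - y ^ 2 / 4 := by
    have h : 0 ≤ (y - 0.31) * (0.4616 - y) := mul_nonneg (by linarith) (by linarith)
    nlinarith [mul_nonneg h h, mul_nonneg h (sq_nonneg (y - 1 / 3)), sq_nonneg (y - 0.43)]
  have h_cos_nonneg : 0 ≤ cos (y / 2) :=
    cos_nonneg_of_mem_Icc ⟨by linarith [pi_gt_three], by linarith [pi_gt_three]⟩
  rw [le_div_iff₀ (sqrt_pos.mpr h_sin)]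
  refine le_of_sq_le_sq ?_ h_cos_nonneg
  rw [mul_pow, sq_sqrt h_sin.le]
  exact ((mul_le_mul_of_nonneg_left h_sin_le (by positivity)).trans h_poly).trans h_cos

lemma mul_le_sin_half_mul_sin {c : ℝ} (hc₀ : 0 ≤ c) (hc₁ : c ≤ 1) (hcy : c ≤ y)
    (hy : y ≤ π / 2) :
    (c / 2 - (c / 2) ^ 3 / 6) * (c - c ^ 3 / 6) ≤ sin (y / 2) * sin y := by
  have h_pi := pi_pos
  have h_cube_le : c ^ 3 ≤ c := by nlinarith [mul_nonneg hc₀ (sub_nonneg.mpr hc₁)]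
  refine mul_le_mul ?_ ?_ (by linarith) (sin_nonneg_of_nonneg_of_le_pi (by linarith) (by linarith))
  · exact (sin_ge_sub_cube (by linarith)).trans
      (sin_le_sin_of_le_of_le_pi_div_two (by linarith) (by linarith) (by linarith))
  · exact (sin_ge_sub_cube hc₀).trans
      (sin_le_sin_of_le_of_le_pi_div_two (by linarith) hy hcy)

lemma cos_le_neg_half_of_abs_sub_three_mul_pi_le {θ : ℝ} (hθ : |θ - 3 * π| ≤ π / 3) :
    cos θ ≤ -1 / 2 := by
  have h_shift : cos (θ - 3 * π) = -cos θ := by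
    have h := cos_sub_nat_mul_pi θ 3
    norm_num at h
    exact h
  have h_cos := cos_le_cos_of_nonneg_of_le_pi (abs_nonneg _) (by linarith [pi_pos]) hθ
  rw [cos_abs, cos_pi_div_three, h_shift] at h_cos
  linarith

lemma lt_Δ_pi_sub_of_le (hy₀ : 0.31 ≤ y) (hy₁ : y ≤ 0.375) : 0.46 < Δ (π - y) := by
  have h_pi := pi_lt_d4
  have h_three := pi_gt_three
  have h_sin := mul_le_sin_half_mul_sin (c := 0.31) (by norm_num) (by norm_num) hy₀ (by linarith)
  have h_remainder : (1 + cos (45 / 2 * y)) / (sin (y / 2) * sin y) ≤ 42.7 := by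
    rw [div_le_iff₀ (by linarith)]
    linarith [cos_le_one (45 / 2 * y)]
  have h_main := le_cos_half_div_sqrt_sin hy₀ (by linarith)
  have h_lower := le_Δ_pi_sub (y := y) (by linarith) (by linarith)
  rw [b_twenty_two] at h_lower
  nlinarith

lemma lt_Δ_pi_sub_of_ge (hy₀ : 0.375 ≤ y) (hy₁ : y ≤ 0.4616) : 0.46 < Δ (π - y) := by
  have h_pi_lt := pi_lt_d4
  have h_pi_gt := pi_gt_d4
  have h_sin := mul_le_sin_half_mul_sin (c := 0.375) (by norm_num) (by norm_num) hy₀ (by linarith)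
  have h_phase : cos (45 / 2 * y) ≤ -1 / 2 :=
    cos_le_neg_half_of_abs_sub_three_mul_pi_le (abs_le.mpr ⟨by linarith, by linarith⟩)
  have h_remainder : (1 + cos (45 / 2 * y)) / (sin (y / 2) * sin y) ≤ 7.4 := by
    rw [div_le_iff₀ (by linarith)]
    linarith
  have h_main := le_cos_half_div_sqrt_sin (by linarith) hy₁
  have h_lower := le_Δ_pi_sub (y := y) (by linarith) (by linarith)
  rw [b_twenty_two] at h_lower
  nlinarith

end Numerics

theorem lemma8_b : ∀ x ∈ Set.Icc (2.68 : ℝ) 2.83, Δ x > 0.46 := by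
  rintro x ⟨hx₀, hx₁⟩
  rw [← sub_sub_cancel π x]
  rcases le_total (π - x) 0.375 with h | h
  · exact lt_Δ_pi_sub_of_le (by linarith [pi_gt_d4]) h
  · exact lt_Δ_pi_sub_of_ge h (by linarith [pi_lt_d4])
end

section
/- With Δ(x) = Σ_{k=0}^{21} (−1)^k (b_k − b_{22}) cos(kx) − (820/33)(1 − cos(x/10)), where b_{2k} = b_{2k+1} = 4^{−k}·binomial(2k,k): Δ(x) > 1.78 for all x ∈ [3.021, 3.051]. -/
open Real

/-!
Substituting `y = π - x` removes the signs, since `(-1) ^ k * cos (k * x) = cos (k * y)`, and leaves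
a cosine sum whose coefficients `b k - b 22` are nonnegative because `b` is antitone. Every
`cos (k * y)` with `k ≤ 21` decreases on `[0, π / 21]`, and `y < 0.1206 < π / 21` on the interval in
question, so the cosine sum is at least its value at `0.1206`. Replacing each cosine there by its
Maclaurin polynomial of degree 6, a lower bound by the Lagrange form of the remainder, and
`1 - cos (x / 10)` by `(x / 10) ^ 2 / 2 ≤ 0.3051 ^ 2 / 2` leaves a rational number exceeding `1.78`.
-/

open scoped Nat

section Maclaurin

/-- The Maclaurin polynomial of the cosine of degree `2 * n`, in closed form. -/
noncomputable def cosMaclaurin (n : ℕ) (x : ℝ) : ℝ :=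
  ∑ i ∈ Finset.range (n + 1), (-1) ^ i * x ^ (2 * i) / (2 * i)!

theorem cosMaclaurin_succ (n : ℕ) (x : ℝ) :
    cosMaclaurin (n + 1) x =
      cosMaclaurin n x + (-1) ^ (n + 1) * x ^ (2 * (n + 1)) / (2 * (n + 1))! :=
  Finset.sum_range_succ _ _

theorem taylorWithinEval_cos_zero {s : Set ℝ} (hs : UniqueDiffOn ℝ s) (h0 : 0 ∈ s) (n : ℕ)
    (x : ℝ) : taylorWithinEval cos (2 * n + 1) s 0 x = cosMaclaurin n x := by
  have iteratedDerivWithin_cos (k : ℕ) :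
      iteratedDerivWithin k cos s 0 = iteratedDeriv k cos 0 :=
    iteratedDerivWithin_eq_iteratedDeriv hs contDiff_cos.contDiffAt h0
  rw [taylor_within_apply]
  induction n with
  | zero => simp [cosMaclaurin, Finset.sum_range_succ, iteratedDerivWithin_cos]
  | succ n ih =>
    rw [Finset.sum_range_succ, Finset.sum_range_succ, iteratedDerivWithin_cos,
      iteratedDerivWithin_cos, iteratedDeriv_even_cos, iteratedDeriv_odd_cos,
      show Finset.range (2 * (n + 1)) = Finset.range (2 * n + 1 + 1) from rfl, ih,
      cosMaclaurin_succ]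
    simp only [sub_zero, Pi.mul_apply, Pi.pow_apply, Pi.neg_apply, Pi.one_apply, cos_zero,
      sin_zero, smul_eq_mul]
    ring

theorem abs_cos_sub_cosMaclaurin_le (n : ℕ) (x : ℝ) :
    |cos x - cosMaclaurin n x| ≤ x ^ (2 * (n + 1)) / (2 * (n + 1))! := by
  rcases eq_or_ne 0 x with rfl | hx
  · simp [cosMaclaurin, Finset.sum_range_succ']
  obtain ⟨ξ, -, hξ⟩ := taylor_mean_remainder_lagrange_iteratedDeriv (n := 2 * n + 1) hx
    contDiff_cos.contDiffOn
  rw [taylorWithinEval_cos_zero (uniqueDiffOn_uIcc hx) Set.left_mem_uIcc,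
    show 2 * n + 1 + 1 = 2 * (n + 1) by ring, iteratedDeriv_even_cos, sub_zero] at hξ
  have derivative_le_one : |((-1) ^ (n + 1) * cos : ℝ → ℝ) ξ| ≤ 1 := by
    simpa [abs_mul] using abs_cos_le_one ξ
  have even_pow_nonneg : 0 ≤ x ^ (2 * (n + 1)) := (even_two_mul _).pow_nonneg x
  rw [hξ, abs_div, abs_mul, abs_of_nonneg even_pow_nonneg, Nat.abs_cast]
  gcongr
  exact mul_le_of_le_one_left even_pow_nonneg derivative_le_one

theorem cosMaclaurin_le_cos {n : ℕ} (hn : Odd n) (x : ℝ) : cosMaclaurin n x ≤ cos x := by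
  obtain ⟨m, rfl⟩ := hn
  have remainder_le := (abs_le.mp (abs_cos_sub_cosMaclaurin_le (2 * m) x)).1
  rw [cosMaclaurin_succ, (even_two_mul m).add_one.neg_one_pow, neg_one_mul, neg_div]
  linarith

end Maclaurin

section CosineSums

theorem neg_one_pow_mul_cos_nat_mul (k : ℕ) (x : ℝ) :
    (-1) ^ k * cos (k * x) = cos (k * (π - x)) := by
  rw [mul_sub, cos_nat_mul_pi_sub]

theorem antitoneOn_cos_nat_mul {k n : ℕ} (hk : k ≤ n) :
    AntitoneOn (fun y : ℝ ↦ cos (k * y)) (Set.Icc 0 (π / n)) := by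
  intro y hy z hz hyz
  have mul_le_pi : (k : ℝ) * z ≤ π :=
    calc (k : ℝ) * z ≤ n * (π / n) := by gcongr; exacts [hz.1, hz.2]
      _ = π * (n / n) := mul_div_left_comm _ _ _
      _ ≤ π := mul_le_of_le_one_right pi_nonneg (div_self_le_one _)
  exact cos_le_cos_of_nonneg_of_le_pi (mul_nonneg k.cast_nonneg hy.1) mul_le_pi (by gcongr)

theorem antitoneOn_sum_mul_cos_nat_mul {c : ℕ → ℝ} {n : ℕ} (hc : ∀ k ≤ n, 0 ≤ c k) :
    AntitoneOn (fun y : ℝ ↦ ∑ k ∈ Finset.range (n + 1), c k * cos (k * y))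
      (Set.Icc 0 (π / n)) := by
  intro y hy z hz hyz
  refine Finset.sum_le_sum fun k hk ↦ ?_
  have hkn : k ≤ n := Finset.mem_range_succ_iff.mp hk
  exact mul_le_mul_of_nonneg_left (antitoneOn_cos_nat_mul hkn hy hz hyz) (hc k hkn)

end CosineSums

section Vietoris

theorem antitone_centralBinom_div_four_pow :
    Antitone fun n : ℕ ↦ (n.centralBinom : ℝ) / 4 ^ n := by
  refine antitone_nat_of_succ_le fun n ↦ ?_
  have recurrence : ((n : ℝ) + 1) * (n + 1).centralBinom = 2 * (2 * n + 1) * n.centralBinom := by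
    exact_mod_cast n.succ_mul_centralBinom_succ
  have centralBinom_succ_le : ((n + 1).centralBinom : ℝ) ≤ 4 * n.centralBinom := by
    refine le_of_mul_le_mul_left ?_ n.cast_add_one_pos
    linarith [n.centralBinom.cast_nonneg (α := ℝ)]
  rw [pow_succ', ← div_div, div_le_div_iff_of_pos_right (by positivity)]
  linarith

theorem antitone_b : Antitone b := fun _ _ h ↦
  antitone_centralBinom_div_four_pow (Nat.div_le_div_right h)

theorem Δ_eq_sum_cos_pi_sub (x : ℝ) :
    Δ x = ∑ k ∈ Finset.range 22, (b k - b 22) * cos (k * (π - x))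
      - 820 / 33 * (1 - cos (x / 10)) := by
  simp only [Δ, ← neg_one_pow_mul_cos_nat_mul]
  congr! 2
  ring

theorem sum_cos_sub_sq_le_Δ {x y : ℝ} (hx : x ≤ π) (hxy : π - x ≤ y) (hy : y ≤ π / 21) :
    ∑ k ∈ Finset.range 22, (b k - b 22) * cos (k * y) - 820 / 33 * ((x / 10) ^ 2 / 2) ≤ Δ x := by
  have coeff_nonneg : ∀ k ≤ 21, 0 ≤ b k - b 22 := fun k hk ↦
    sub_nonneg.mpr (antitone_b (by lia))
  have sum_le := antitoneOn_sum_mul_cos_nat_mul coeff_nonneg (a := π - x) (b := y)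
    ⟨sub_nonneg.mpr hx, by simpa using hxy.trans hy⟩
    ⟨(sub_nonneg.mpr hx).trans hxy, by simpa using hy⟩ hxy
  rw [Δ_eq_sum_cos_pi_sub]
  have one_sub_cos_le : 1 - cos (x / 10) ≤ (x / 10) ^ 2 / 2 :=
    sub_le_comm.mp one_sub_sq_div_two_le_cos
  exact sub_le_sub sum_le (by gcongr)

theorem lt_sum_cosMaclaurin_three :
    (1.78 : ℝ) + 820 / 33 * ((3.051 / 10) ^ 2 / 2) <
      ∑ k ∈ Finset.range 22, (b k - b 22) * cosMaclaurin 3 (k * 0.1206) := by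
  simp only [Finset.sum_range_succ, Finset.sum_range_zero, cosMaclaurin]
  norm_num [b, Nat.choose, Nat.factorial]

end Vietoris

theorem lemma8_f : ∀ x ∈ Set.Icc (3.021 : ℝ) 3.051, Δ x > 1.78 := by
  rintro x ⟨hx₁, hx₂⟩
  have x_le_pi : x ≤ π := by linarith [pi_gt_d2]
  have pi_sub_le : π - x ≤ 0.1206 := by linarith [pi_lt_d4]
  have le_pi_div : (0.1206 : ℝ) ≤ π / 21 := by linarith [pi_gt_three]
  calc (1.78 : ℝ)
      < ∑ k ∈ Finset.range 22, (b k - b 22) * cosMaclaurin 3 (k * 0.1206)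
          - 820 / 33 * ((3.051 / 10) ^ 2 / 2) := lt_sub_iff_add_lt.mpr lt_sum_cosMaclaurin_three
    _ ≤ ∑ k ∈ Finset.range 22, (b k - b 22) * cos (k * 0.1206)
          - 820 / 33 * ((x / 10) ^ 2 / 2) := by
        gcongr with k hk
        · exact sub_nonneg.mpr (antitone_b (Finset.mem_range.mp hk).le)
        · exact cosMaclaurin_le_cos (by decide) _
    _ ≤ Δ x := sum_cos_sub_sq_le_Δ x_le_pi pi_sub_le le_pi_div
end
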